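/- Let X ∈ ℝ^{p×d} have rank ρ and compact singular value decomposition X = UΣV^T, let R ∈ ℝ^{d×r} be any matrix, and set E = I_ρ − V^T R R^T V. If ‖E‖₂ < 1, then for every u ∈ ℝ^p, | ‖X^T u‖₂² − ‖R^T X^T u‖₂² | ≤ (‖E‖₂ / (1 − ‖E‖₂)) · ‖R^T X^T u‖₂². -/

import Mathlib

open Matrix

/-- Euclidean norm of a vector in ℝ^n. -/
noncomputable def euclNorm {n : ℕ} (x : Fin n → ℝ) : ℝ := Real.sqrt (∑ i, x i ^ 2)

/-- Spectral norm (ℓ₂ operator norm) of a real matrix: the supremum of `‖A x‖₂`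
over unit vectors `x`. -/
noncomputable def specNorm {m n : ℕ} (A : Matrix (Fin m) (Fin n) ℝ) : ℝ :=
  sSup {c : ℝ | ∃ x : Fin n → ℝ, euclNorm x = 1 ∧ c = euclNorm (A.mulVec x)}

/-!
With `A = RᵀV`, orthonormality of the columns of `V` gives `‖V w‖² - ‖Rᵀ V w‖² = ‖w‖² - ‖A w‖²`,
which is the quadratic form of `E = 1 - AᵀA` at `w`, so Cauchy–Schwarz bounds it by `‖E‖ ‖w‖²`.
A bound relative to `‖w‖²` turns into one relative to `‖A w‖²` at the cost of dividing by `1 - ‖E‖`.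
The vector `Xᵀ u` has the form `V w`, with `w = ΣᵀUᵀu`, because `X = UΣVᵀ`.
-/

section QuadraticForm

open WithLp

theorem abs_sub_le_div_one_sub_mul {K : Type*} [Field K] [LinearOrder K] [IsStrictOrderedRing K]
    {a b ε : K} (hε₀ : 0 ≤ ε) (hε₁ : ε < 1) (h : |a - b| ≤ ε * a) :
    |a - b| ≤ ε / (1 - ε) * b := by
  rw [div_mul_eq_mul_div, le_div_iff₀ (sub_pos.2 hε₁)]
  have hε : ε * (a - b) ≤ ε * |a - b| := mul_le_mul_of_nonneg_left (le_abs_self _) hε₀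
  linarith

open scoped InnerProduct in
theorem abs_norm_sq_sub_norm_apply_sq_le {𝕜 E F : Type*} [RCLike 𝕜]
    [NormedAddCommGroup E] [InnerProductSpace 𝕜 E] [CompleteSpace E]
    [NormedAddCommGroup F] [InnerProductSpace 𝕜 F] [CompleteSpace F] (A : E →L[𝕜] F) (x : E) :
    |‖x‖ ^ 2 - ‖A x‖ ^ 2| ≤ ‖1 - A† ∘L A‖ * ‖x‖ ^ 2 :=
  calc |‖x‖ ^ 2 - ‖A x‖ ^ 2|
      = |RCLike.re (inner 𝕜 x ((1 - A† ∘L A) x))| := by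
        rw [_root_.sub_apply, one_apply_eq_self, inner_sub_right, map_sub,
          ← InnerProductSpace.norm_sq_eq_re_inner,
          ContinuousLinearMap.apply_norm_sq_eq_inner_adjoint_right]
    _ ≤ ‖x‖ * ‖(1 - A† ∘L A) x‖ := (RCLike.abs_re_le_norm _).trans (norm_inner_le_norm _ _)
    _ ≤ ‖x‖ * (‖1 - A† ∘L A‖ * ‖x‖) := by gcongr; exact ContinuousLinearMap.le_opNorm _ _
    _ = ‖1 - A† ∘L A‖ * ‖x‖ ^ 2 := by ring

section L2OpNorm

open scoped Matrix.Norms.L2Operator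

variable {𝕜 m n : Type*} [RCLike 𝕜] [Fintype m] [Fintype n] [DecidableEq n]

theorem abs_norm_toLp_sq_sub_norm_toLp_mulVec_sq_le (A : Matrix m n 𝕜) (x : n → 𝕜) :
    |‖toLp 2 x‖ ^ 2 - ‖toLp 2 (A *ᵥ x)‖ ^ 2| ≤ ‖1 - Aᴴ * A‖ * ‖toLp 2 x‖ ^ 2 := by
  classical
  let T := (toEuclideanLin A).toContinuousLinearMap
  have hT : toEuclideanCLM (𝕜 := 𝕜) (1 - Aᴴ * A) = 1 - ContinuousLinearMap.adjoint T ∘L T := by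
    have hTadj : (toEuclideanLin Aᴴ).toContinuousLinearMap = ContinuousLinearMap.adjoint T := by
      rw [toEuclideanLin_conjTranspose_eq_adjoint, LinearMap.adjoint_toContinuousLinearMap]
    rw [map_sub, map_one, ← hTadj]
    congr 1
    ext1 y
    exact congrArg (toLp 2) (mulVec_mulVec (ofLp y) Aᴴ A).symm
  rw [← l2_opNorm_toEuclideanCLM, hT]
  exact abs_norm_sq_sub_norm_apply_sq_le T (toLp 2 x)

theorem norm_toLp_mulVec_of_conjTranspose_mul_self_eq_one {V : Matrix m n 𝕜} (hV : Vᴴ * V = 1)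
    (x : n → 𝕜) : ‖toLp 2 (V *ᵥ x)‖ = ‖toLp 2 x‖ := by
  have h := abs_norm_toLp_sq_sub_norm_toLp_mulVec_sq_le V x
  rw [hV, sub_self, norm_zero, zero_mul, abs_nonpos_iff, sub_eq_zero] at h
  exact ((sq_eq_sq₀ (norm_nonneg _) (norm_nonneg _)).1 h).symm

theorem sampled_quadratic_form_error_relative_general {p d r : Type*}
    [Fintype p] [Fintype d] [Fintype r] {X : Matrix p d 𝕜} {W : Matrix p n 𝕜}
    {V : Matrix d n 𝕜} (hV : Vᴴ * V = 1) (hX : X = W * Vᴴ) (R : Matrix d r 𝕜)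
    (hE : ‖1 - Vᴴ * R * Rᴴ * V‖ < 1) (u : p → 𝕜) :
    |‖toLp 2 (Xᴴ *ᵥ u)‖ ^ 2 - ‖toLp 2 (Rᴴ *ᵥ (Xᴴ *ᵥ u))‖ ^ 2|
      ≤ ‖1 - Vᴴ * R * Rᴴ * V‖ / (1 - ‖1 - Vᴴ * R * Rᴴ * V‖)
          * ‖toLp 2 (Rᴴ *ᵥ (Xᴴ *ᵥ u))‖ ^ 2 := by
  have hXu : Xᴴ *ᵥ u = V *ᵥ (Wᴴ *ᵥ u) := by
    rw [hX, conjTranspose_mul, conjTranspose_conjTranspose, mulVec_mulVec]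
  have hgram : Vᴴ * R * Rᴴ * V = (Rᴴ * V)ᴴ * (Rᴴ * V) := by
    rw [conjTranspose_mul, conjTranspose_conjTranspose, ← Matrix.mul_assoc]
  have hbound := abs_norm_toLp_sq_sub_norm_toLp_mulVec_sq_le (Rᴴ * V) (Wᴴ *ᵥ u)
  rw [← hgram, ← mulVec_mulVec, ← norm_toLp_mulVec_of_conjTranspose_mul_self_eq_one hV,
    ← hXu] at hbound
  exact abs_sub_le_div_one_sub_mul (norm_nonneg _) hE hbound

end L2OpNorm

end QuadraticForm

theorem euclNorm_eq_norm {n : ℕ} (x : Fin n → ℝ) : euclNorm x = ‖WithLp.toLp 2 x‖ := by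
  simp [euclNorm, EuclideanSpace.norm_eq]

open scoped Matrix.Norms.L2Operator in
theorem specNorm_eq_l2_opNorm {m n : ℕ} (A : Matrix (Fin m) (Fin n) ℝ) : specNorm A = ‖A‖ := by
  rw [l2_opNorm_def, ← ContinuousLinearMap.sSup_sphere_eq_norm, specNorm]
  congr 1
  ext c
  constructor
  · rintro ⟨x, hx, rfl⟩
    exact ⟨WithLp.toLp 2 x, by simpa [euclNorm_eq_norm] using hx, (euclNorm_eq_norm _).symm⟩
  · rintro ⟨x, hx, rfl⟩
    exact ⟨x.ofLp, by simpa [euclNorm_eq_norm] using hx, (euclNorm_eq_norm _).symm⟩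

/-- If `X = UΣVᵀ` is a compact SVD of the rank-`ρ` matrix `X ∈ ℝ^{p×d}`,
`R ∈ ℝ^{d×r}` is any matrix, `E = I_ρ − VᵀRRᵀV` and `‖E‖₂ < 1`, then for every
`u ∈ ℝ^p`, `| ‖Xᵀu‖₂² − ‖RᵀXᵀu‖₂² | ≤ (‖E‖₂/(1 − ‖E‖₂)) ‖RᵀXᵀu‖₂²`. -/
theorem sampled_quadratic_form_error_relative
    (p d r ρ : ℕ)
    (X : Matrix (Fin p) (Fin d) ℝ) (hrank : X.rank = ρ)
    (U : Matrix (Fin p) (Fin ρ) ℝ) (S : Matrix (Fin ρ) (Fin ρ) ℝ)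
    (V : Matrix (Fin d) (Fin ρ) ℝ)
    (hU : Uᵀ * U = 1) (hV : Vᵀ * V = 1)
    (hS : ∃ σ : Fin ρ → ℝ, (∀ i, 0 < σ i) ∧ S = Matrix.diagonal σ)
    (hX : X = U * S * Vᵀ)
    (R : Matrix (Fin d) (Fin r) ℝ)
    (hE : specNorm ((1 : Matrix (Fin ρ) (Fin ρ) ℝ) - Vᵀ * R * Rᵀ * V) < 1)
    (u : Fin p → ℝ) :
    |euclNorm (Xᵀ.mulVec u) ^ 2 - euclNorm (Rᵀ.mulVec (Xᵀ.mulVec u)) ^ 2|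
      ≤ specNorm ((1 : Matrix (Fin ρ) (Fin ρ) ℝ) - Vᵀ * R * Rᵀ * V)
          / (1 - specNorm ((1 : Matrix (Fin ρ) (Fin ρ) ℝ) - Vᵀ * R * Rᵀ * V))
          * euclNorm (Rᵀ.mulVec (Xᵀ.mulVec u)) ^ 2 := by
  simp only [specNorm_eq_l2_opNorm, euclNorm_eq_norm, ← conjTranspose_eq_transpose_of_trivial]
    at hV hX hE ⊢
  exact sampled_quadratic_form_error_relative_general hV hX R hE u
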